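/- Let A, B, B', C, C' be complex-valued multiplicative characters of a finite field F_q with q elements, let x ∈ F_q with x ≠ 0, y ∈ F_q, and t ∈ F_q with t ≠ 0 and t ≠ 1. Then (1/(q-1))·Σ_θ {Aθ choose θ}·F₂(Aθ;B,B';C,C';x,y)·θ(t) = Ā(1-t)·F₂(A;B,B';C,C'; x/(1-t), y/(1-t)) - Ā(-t)·C̄'(y)·(B̄'C')(1-y)·₂F₁(A,B;C | -x/t) - Ā(-t)·( {B choose C}·{B' choose C'}·ε(y) - F₂(ε;B,B';C,C';x,y) ) + (BC)(-1)·Ā(-x)·C̄'(y)·(B̄'C')(1-y)·₂F₁(A, AC̄; AB̄ | -t/x), where the sum on the left runs over all multiplicative characters θ of F_q. -/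

import Mathlib

open Finset

noncomputable instance {F : Type*} [Field F] [Fintype F] : Fintype (MulChar F ℂ) :=
  Fintype.ofFinite _

/-- Finite-field binomial coefficient `{A choose B} = B(-1) · J(A, B̄)`,
where `J(χ,λ) = ∑_u χ(u)·λ(1-u)` is the Jacobi sum. -/
noncomputable def binom {F : Type*} [Field F] [Fintype F] (A B : MulChar F ℂ) : ℂ :=
  B (-1) * ∑ u : F, A u * B⁻¹ (1 - u)

/-- Finite-field Gauss hypergeometric series
`₂F₁(A,B;C|x) = ε(x)·(BC)(-1)·∑_y B(y)·(B̄C)(1-y)·Ā(1-xy)`. -/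
noncomputable def gauss2F1 {F : Type*} [Field F] [Fintype F]
    (A B C : MulChar F ℂ) (x : F) : ℂ :=
  (1 : MulChar F ℂ) x * (B * C) (-1) *
    ∑ y : F, B y * (B⁻¹ * C) (1 - y) * A⁻¹ (1 - x * y)

/-- Finite-field `₃F₂` hypergeometric series. -/
noncomputable def hyper3F2 {F : Type*} [Field F] [Fintype F]
    (A₀ A₁ A₂ B₁ B₂ : MulChar F ℂ) (x : F) : ℂ :=
  ((Fintype.card F : ℂ) - 1)⁻¹ *
    ∑ χ : MulChar F ℂ,
      binom (A₀ * χ) χ * binom (A₁ * χ) (B₁ * χ) * binom (A₂ * χ) (B₂ * χ) * χ x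

/-- Finite-field Appell series
`F₂(A;B,B';C,C';x,y) = ε(xy)·(BB'CC')(-1)·∑_{u,v} B(u)B'(v)(B̄C)(1-u)(B̄'C')(1-v)·Ā(1-ux-vy)`. -/
noncomputable def appellF2 {F : Type*} [Field F] [Fintype F]
    (A B B' C C' : MulChar F ℂ) (x y : F) : ℂ :=
  (1 : MulChar F ℂ) (x * y) * (B * B' * C * C') (-1) *
    ∑ u : F, ∑ v : F,
      B u * B' v * (B⁻¹ * C) (1 - u) * (B'⁻¹ * C') (1 - v) * A⁻¹ (1 - u * x - v * y)

open scoped Classical in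
/-- `δ(x) = 1` if `x = 0`, and `0` otherwise. -/
noncomputable def deltaF {F : Type*} [Field F] (x : F) : ℂ :=
  if x = 0 then 1 else 0

open scoped Classical in
/-- `δ(χ) = 1` if `χ = ε` (the trivial character), and `0` otherwise. -/
noncomputable def deltaChar {F : Type*} [Field F] [Fintype F] (χ : MulChar F ℂ) : ℂ :=
  if χ = 1 then 1 else 0

/-!
Greene's finite binomial theorem `(q - 1)⁻¹ ∑_θ {Aθ choose θ} θ(t) = Ā(1 - t) - δ(t)`, applied at
`t / w`, sums the series over `θ` inside the double sum defining `F₂`, with `w = 1 - ux - vy`. It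
turns `Ā(w)` into `Ā(w - t)`, and homogeneity of `F₂` absorbs the shift as the rescaling by
`1 / (1 - t)`. Where `w = 0` the series is zero although `Ā(w - t) = Ā(-t)` is not; the resulting
correction over `w = 0` is the full sum of the weights, a product of binomial coefficients, minus
their sum over `w ≠ 0`, which is `F₂(ε; …)`. The two `₂F₁` terms cancel, by the transformation of
`₂F₁` under `z ↦ 1 / z`.
-/

section Orthogonality

variable {M R : Type*} [CommMonoid M] [Finite M] [CommRing R] [IsDomain R]
  [HasEnoughRootsOfUnity R (Monoid.exponent Mˣ)] [Fintype (MulChar M R)]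

theorem sum_mulChar_apply_eq_zero {a : M} (ha : a ≠ 1) : ∑ χ : MulChar M R, χ a = 0 := by
  obtain ⟨χ, hχ⟩ := MulChar.exists_apply_ne_one_of_hasEnoughRootsOfUnity M R ha
  refine eq_zero_of_mul_eq_self_left hχ ?_
  simp only [mul_sum, ← MulChar.mul_apply]
  exact Fintype.sum_bijective _ (Group.mulLeft_bijective χ) _ _ fun _ ↦ rfl

theorem sum_mulChar_apply [DecidableEq M] (a : M) :
    ∑ χ : MulChar M R, χ a = if a = 1 then (Nat.card Mˣ : R) else 0 := by
  split_ifs with ha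
  · simp [ha, ← MulChar.card_eq_card_units_of_hasEnoughRootsOfUnity M R]
  · exact sum_mulChar_apply_eq_zero ha

end Orthogonality

section Inversion

variable {F R : Type*} [Field F] [CommMonoidWithZero R]

lemma mulChar_apply_neg_one_mul_self (χ : MulChar F R) : χ (-1) * χ (-1) = 1 := by
  rw [← map_mul, neg_one_mul, neg_neg, map_one]

lemma mulChar_inv_apply_neg_one (χ : MulChar F R) : χ⁻¹ (-1) = χ (-1) := by
  rw [MulChar.inv_apply', inv_neg_one]

lemma mulChar_mul_inv_apply_self (χ : MulChar F R) {a : F} (ha : a ≠ 0) : χ a * χ⁻¹ a = 1 := by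
  rw [← MulChar.mul_apply, mul_inv_cancel, MulChar.one_apply ha.isUnit]

lemma mulChar_apply_one_sub_mul_inv (χ : MulChar F R) {y z : F} (hy : y ≠ 0) (hz : z ≠ 0) :
    χ (1 - z * y⁻¹) = χ (-z) * χ⁻¹ y * χ (1 - z⁻¹ * y) := by
  rw [MulChar.inv_apply', ← map_mul, ← map_mul]
  congr 1
  field_simp
  ring

end Inversion

theorem jacobiSum_eq_apply_neg_one_mul_jacobiSum {F R : Type*} [Field F] [Fintype F] [CommRing R]
    (χ ψ : MulChar F R) : jacobiSum χ ψ = ψ (-1) * jacobiSum (χ * ψ)⁻¹ ψ := by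
  rw [jacobiSum, ← Equiv.sum_comp (Equiv.inv F), jacobiSum, mul_sum]
  refine sum_congr rfl fun u _ ↦ ?_
  rcases eq_or_ne u 0 with rfl | hu
  · simp [MulChar.map_zero]
  have hψ := mulChar_apply_one_sub_mul_inv ψ hu one_ne_zero
  simp only [one_mul, inv_one] at hψ
  rw [Equiv.inv_apply, hψ, ← MulChar.inv_apply', mul_inv, MulChar.mul_apply]
  ring

section BetaWeight

variable {F R : Type*} [Field F] [CommRing R]

/-- The finite-field analogue `(BC)(-1) · B(u) · (B̄C)(1 - u)` of the integrand
`u ^ (b - 1) * (1 - u) ^ (c - b - 1)` in Euler's integrals for `₂F₁` and `F₂`. The sign is chosen so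
that the weights add up to the binomial coefficient `{B choose C}`. -/
noncomputable def betaWeight (B C : MulChar F R) (u : F) : R :=
  (B * C) (-1) * (B u * (B⁻¹ * C) (1 - u))

theorem apply_mul_betaWeight_inv (A B C : MulChar F R) (y : F) :
    A y * betaWeight B C y⁻¹ = (B * C) (-1) * betaWeight (A * C⁻¹) (A * B⁻¹) y := by
  rcases eq_or_ne y 0 with rfl | hy
  · simp [betaWeight, MulChar.map_zero]
  have hBC : (B⁻¹ * C) (1 - y⁻¹) = (B⁻¹ * C) (-1) * (B⁻¹ * C)⁻¹ y * (B⁻¹ * C) (1 - y) := by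
    simpa using mulChar_apply_one_sub_mul_inv (B⁻¹ * C) hy one_ne_zero
  have hquot : (A * C⁻¹)⁻¹ * (A * B⁻¹) = B⁻¹ * C := by
    rw [mul_inv, inv_inv, mul_mul_mul_comm, inv_mul_cancel, one_mul, mul_comm]
  rw [betaWeight, betaWeight, hBC, hquot, ← MulChar.inv_apply', mul_inv, inv_inv]
  simp only [MulChar.mul_apply, mulChar_inv_apply_neg_one]
  linear_combination (B (-1) * C (-1)) ^ 2 * A y * C⁻¹ y * (B⁻¹ (1 - y) * C (1 - y)) *
    (mulChar_mul_inv_apply_self B hy - mulChar_apply_neg_one_mul_self A)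

end BetaWeight

section HypergeometricSums

variable {F : Type*} [Field F] [Fintype F]

theorem sum_betaWeight (B C : MulChar F ℂ) : ∑ u, betaWeight B C u = binom B C := by
  have hJ : jacobiSum B (B⁻¹ * C) = B (-1) * jacobiSum B C⁻¹ := by
    rw [jacobiSum_comm, jacobiSum_eq_apply_neg_one_mul_jacobiSum, mul_right_comm, inv_mul_cancel,
      one_mul, jacobiSum_comm]
  calc ∑ u, betaWeight B C u = (B * C) (-1) * jacobiSum B (B⁻¹ * C) := (mul_sum ..).symm
    _ = C (-1) * jacobiSum B C⁻¹ := by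
      rw [hJ, MulChar.mul_apply]
      linear_combination C (-1) * jacobiSum B C⁻¹ * mulChar_apply_neg_one_mul_self B

theorem gauss2F1_eq_sum_betaWeight (A B C : MulChar F ℂ) (z : F) :
    gauss2F1 A B C z = (1 : MulChar F ℂ) z * ∑ y, betaWeight B C y * A⁻¹ (1 - z * y) := by
  simp only [gauss2F1, betaWeight, mul_sum]
  exact sum_congr rfl fun y _ ↦ by ring

theorem gauss2F1_eq_mul_gauss2F1_inv (A B C : MulChar F ℂ) (z : F) :
    gauss2F1 A B C z =
      (B * C) (-1) * A⁻¹ (-z) * gauss2F1 A (A * C⁻¹) (A * B⁻¹) z⁻¹ := by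
  rcases eq_or_ne z 0 with rfl | hz
  · simp [gauss2F1, MulChar.map_zero]
  rw [gauss2F1_eq_sum_betaWeight, gauss2F1_eq_sum_betaWeight, MulChar.one_apply hz.isUnit,
    MulChar.one_apply (inv_ne_zero hz).isUnit, one_mul, one_mul, mul_sum,
    ← Equiv.sum_comp (Equiv.inv F)]
  refine sum_congr rfl fun y _ ↦ ?_
  rw [Equiv.inv_apply]
  rcases eq_or_ne y 0 with rfl | hy
  · simp [betaWeight, MulChar.map_zero]
  rw [mulChar_apply_one_sub_mul_inv A⁻¹ hy hz, inv_inv]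
  linear_combination A⁻¹ (-z) * A⁻¹ (1 - z⁻¹ * y) * apply_mul_betaWeight_inv A B C y

theorem appellF2_eq_sum_betaWeight (A B B' C C' : MulChar F ℂ) (x y : F) :
    appellF2 A B B' C C' x y = (1 : MulChar F ℂ) (x * y) *
      ∑ u, ∑ v, betaWeight B C u * betaWeight B' C' v * A⁻¹ (1 - u * x - v * y) := by
  simp only [appellF2, betaWeight, mul_sum, MulChar.mul_apply]
  exact sum_congr rfl fun u _ ↦ sum_congr rfl fun v _ ↦ by ring

theorem apply_mul_appellF2_div (A B B' C C' : MulChar F ℂ) (x y : F) {s : F} (hs : s ≠ 0) :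
    A⁻¹ s * appellF2 A B B' C C' (x / s) (y / s) = (1 : MulChar F ℂ) (x * y) *
      ∑ u, ∑ v, betaWeight B C u * betaWeight B' C' v * A⁻¹ (s - u * x - v * y) := by
  have hε : (1 : MulChar F ℂ) (x / s * (y / s)) = (1 : MulChar F ℂ) (x * y) := by
    rw [div_mul_div_comm, div_eq_mul_inv, map_mul,
      MulChar.one_apply (inv_ne_zero (mul_ne_zero hs hs)).isUnit, mul_one]
  have hA (u v : F) :
      A⁻¹ (s - u * x - v * y) = A⁻¹ s * A⁻¹ (1 - u * (x / s) - v * (y / s)) := by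
    rw [← map_mul]
    congr 1
    field_simp
  rw [appellF2_eq_sum_betaWeight, hε]
  simp only [hA, mul_sum]
  exact sum_congr rfl fun u _ ↦ sum_congr rfl fun v _ ↦ by ring

theorem binom_mul_binom_eq_sum_betaWeight (B B' C C' : MulChar F ℂ) :
    binom B C * binom B' C' = ∑ u, ∑ v, betaWeight B C u * betaWeight B' C' v := by
  rw [← sum_betaWeight, ← sum_betaWeight, sum_mul_sum]

end HypergeometricSums

section BinomialTheorem

lemma neg_mul_div_one_sub_eq_one_iff {K : Type*} [Field K] {t u : K} (ht : t ≠ 0) (hu : u ≠ 0) :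
    -t * (u / (1 - u)) = 1 ↔ u = (1 - t)⁻¹ := by
  rw [← inv_eq_iff_eq_inv]
  rcases eq_or_ne u 1 with rfl | hu1
  · simp [eq_sub_iff_add_eq, ht]
  have h1u : 1 - u ≠ 0 := sub_ne_zero.2 hu1.symm
  field_simp
  constructor <;> intro h <;> linear_combination -h

variable {F : Type*} [Field F] [Fintype F]

theorem binom_mul_apply_eq_sum (A θ : MulChar F ℂ) (t : F) :
    binom (A * θ) θ * θ t = ∑ u, A u * θ (-t * (u / (1 - u))) := by
  rw [binom, mul_assoc, sum_mul, mul_sum]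
  refine sum_congr rfl fun u _ ↦ ?_
  rw [neg_eq_neg_one_mul t, div_eq_mul_inv, MulChar.mul_apply, MulChar.inv_apply']
  simp only [map_mul]
  ring

theorem sum_binom_mul_apply (A : MulChar F ℂ) (t : F) :
    ((Fintype.card F : ℂ) - 1)⁻¹ * ∑ θ : MulChar F ℂ, binom (A * θ) θ * θ t =
      A⁻¹ (1 - t) - deltaF t := by
  classical
  rcases eq_or_ne t 0 with rfl | ht
  · simp [deltaF, MulChar.map_zero]
  have hq : (Fintype.card F : ℂ) - 1 ≠ 0 := sub_ne_zero.2 (mod_cast Fintype.one_lt_card.ne')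
  have hcard : (Nat.card Fˣ : ℂ) = Fintype.card F - 1 := by
    rw [Nat.card_units, Nat.card_eq_fintype_card, Nat.cast_pred Fintype.card_pos]
  have hcoeff (u : F) : A u * ∑ θ : MulChar F ℂ, θ (-t * (u / (1 - u))) =
      if u = (1 - t)⁻¹ then A u * (Fintype.card F - 1) else 0 := by
    rcases eq_or_ne u 0 with rfl | hu
    · simp [MulChar.map_zero]
    · rw [sum_mulChar_apply, hcard, mul_ite, mul_zero]
      simp only [neg_mul_div_one_sub_eq_one_iff ht hu]
  rw [deltaF, if_neg ht, sub_zero, inv_mul_eq_iff_eq_mul₀ hq]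
  simp only [binom_mul_apply_eq_sum]
  rw [sum_comm]
  simp only [← mul_sum, hcoeff, sum_ite_eq', mem_univ, if_true]
  rw [MulChar.inv_apply', mul_comm]

theorem sum_binom_mul_inv_apply_mul_apply (A : MulChar F ℂ) (w : F) {t : F} (ht : t ≠ 0) :
    ((Fintype.card F : ℂ) - 1)⁻¹ *
        ∑ θ : MulChar F ℂ, binom (A * θ) θ * (A * θ)⁻¹ w * θ t =
      A⁻¹ (w - t) - A⁻¹ (-t) * (1 - (1 : MulChar F ℂ) w) := by
  rcases eq_or_ne w 0 with rfl | hw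
  · simp [MulChar.map_zero]
  have hterm (θ : MulChar F ℂ) :
      binom (A * θ) θ * (A * θ)⁻¹ w * θ t = A⁻¹ w * (binom (A * θ) θ * θ (t / w)) := by
    rw [mul_inv, MulChar.mul_apply, MulChar.inv_apply' θ, div_eq_mul_inv, map_mul]
    ring
  have hw_sub : w * (1 - t / w) = w - t := by field_simp
  rw [sum_congr rfl fun θ _ ↦ hterm θ, ← mul_sum, mul_left_comm, sum_binom_mul_apply, deltaF,
    if_neg (div_ne_zero ht hw), MulChar.one_apply hw.isUnit, sub_zero, ← map_mul, hw_sub, sub_self,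
    mul_zero, sub_zero]

end BinomialTheorem

section GeneratingFunction

variable {F : Type*} [Field F] [Fintype F]

theorem sum_binom_mul_appellF2_mul_apply (A B B' C C' : MulChar F ℂ) (x y : F) {t : F}
    (ht0 : t ≠ 0) (ht1 : t ≠ 1) :
    ((Fintype.card F : ℂ) - 1)⁻¹ *
        ∑ θ : MulChar F ℂ, binom (A * θ) θ * appellF2 (A * θ) B B' C C' x y * θ t =
      A⁻¹ (1 - t) * appellF2 A B B' C C' (x / (1 - t)) (y / (1 - t)) -
      A⁻¹ (-t) *
        (binom B C * binom B' C' * (1 : MulChar F ℂ) (x * y) - appellF2 1 B B' C C' x y) := by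
  have hswap : ((Fintype.card F : ℂ) - 1)⁻¹ *
        ∑ θ : MulChar F ℂ, binom (A * θ) θ * appellF2 (A * θ) B B' C C' x y * θ t =
      (1 : MulChar F ℂ) (x * y) * ∑ u, ∑ v, betaWeight B C u * betaWeight B' C' v *
        (((Fintype.card F : ℂ) - 1)⁻¹ *
          ∑ θ : MulChar F ℂ, binom (A * θ) θ * (A * θ)⁻¹ (1 - u * x - v * y) * θ t) := by
    simp only [appellF2_eq_sum_betaWeight, mul_sum, sum_mul]
    rw [sum_comm]
    refine sum_congr rfl fun u _ ↦ ?_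
    rw [sum_comm]
    exact sum_congr rfl fun v _ ↦ sum_congr rfl fun θ _ ↦ by ring
  have hshift (u v : F) : 1 - u * x - v * y - t = 1 - t - u * x - v * y := by ring
  rw [hswap, apply_mul_appellF2_div A B B' C C' x y (sub_ne_zero.2 ht1.symm),
    binom_mul_binom_eq_sum_betaWeight, appellF2_eq_sum_betaWeight, inv_one]
  simp only [sum_binom_mul_inv_apply_mul_apply A _ ht0, hshift, mul_sum, sum_mul,
    ← sum_sub_distrib]
  exact sum_congr rfl fun u _ ↦ sum_congr rfl fun v _ ↦ by ring

theorem apply_neg_mul_gauss2F1_neg_div (A B C : MulChar F ℂ) (x : F) {t : F} (ht : t ≠ 0) :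
    A⁻¹ (-t) * gauss2F1 A B C (-x / t) =
      (B * C) (-1) * A⁻¹ (-x) * gauss2F1 A (A * C⁻¹) (A * B⁻¹) (-t / x) := by
  have hA : A⁻¹ (-t) * A⁻¹ (-(-x / t)) = A⁻¹ (-x) := by
    rw [← map_mul]
    congr 1
    field_simp
  have hinv : (-x / t)⁻¹ = -t / x := by rw [inv_div, div_neg, neg_div]
  rw [gauss2F1_eq_mul_gauss2F1_inv, hinv, ← hA]
  ring

end GeneratingFunction

/-- a generating function for F₂ in the parameter `A`. -/
theorem appellF2_generating_A {F : Type*} [Field F] [Fintype F]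
    (A B B' C C' : MulChar F ℂ) (x y t : F)
    (hx : x ≠ 0) (ht0 : t ≠ 0) (ht1 : t ≠ 1) :
    ((Fintype.card F : ℂ) - 1)⁻¹ *
        ∑ θ : MulChar F ℂ, binom (A * θ) θ * appellF2 (A * θ) B B' C C' x y * θ t =
      A⁻¹ (1 - t) * appellF2 A B B' C C' (x / (1 - t)) (y / (1 - t)) -
      A⁻¹ (-t) * C'⁻¹ y * (B'⁻¹ * C') (1 - y) * gauss2F1 A B C (-x / t) -
      A⁻¹ (-t) *
        (binom B C * binom B' C' * (1 : MulChar F ℂ) y - appellF2 1 B B' C C' x y) +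
      (B * C) (-1) * A⁻¹ (-x) * C'⁻¹ y * (B'⁻¹ * C') (1 - y) *
        gauss2F1 A (A * C⁻¹) (A * B⁻¹) (-t / x) := by
  have hreflect := apply_neg_mul_gauss2F1_neg_div A B C x ht0
  have hε : (1 : MulChar F ℂ) (x * y) = (1 : MulChar F ℂ) y := by
    rw [map_mul, MulChar.one_apply hx.isUnit, one_mul]
  rw [sum_binom_mul_appellF2_mul_apply A B B' C C' x y ht0 ht1, hε]
  linear_combination C'⁻¹ y * (B'⁻¹ * C') (1 - y) * hreflect
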